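/- Let (X,d) be a metric space and ν a Borel probability measure on X satisfying the Gaussian enlargement property with parameter τ > 0. Let H > 0, let z ∈ X satisfy ∫_X d(z,y)² dν(y) ≤ H·τ, and set Y(y) = max(d(z,y) - √(2Hτ), 0). Then for every λ ≥ 0, ∫_X e^{λY} dν ≤ 1/2 + e^{τλ²}·Φ(λ√(2τ)), and for every β with 0 ≤ β < 1/4, ∫_X exp(β·Y²/τ) dν ≤ 1/2 + (1/2)·(1-4β)^{-1/2}. -/

import Mathlib

open Real MeasureTheory

/-- The standard Gaussian density. -/
noncomputable def gaussPdf (z : ℝ) : ℝ := (Real.sqrt (2 * Real.pi))⁻¹ * Real.exp (-z ^ 2 / 2)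

/-- The standard normal CDF. -/
noncomputable def Phi (r : ℝ) : ℝ := ∫ z in Set.Iic r, gaussPdf z

/-- The inverse of the standard normal CDF. -/
noncomputable def PhiInv : ℝ → ℝ := Function.invFun Phi

/-- The open `r`-enlargement `E_r = {y : d(y,E) < r}` of a set (with `E_0 = E`). -/
noncomputable def enlarge {X : Type*} [MetricSpace X] (E : Set X) (r : ℝ) : Set X :=
  if r = 0 then E else Metric.thickening r E

/-- A Borel probability measure `ν` on a metric space satisfies the Gaussian enlargement
property with parameter `τ > 0` if for every Borel set `E` with `0 < ν(E) < 1` and every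
`r ≥ 0`, `ν(E_r) ≥ Φ(Φ⁻¹(ν(E)) + r/√(2τ))`. -/
def GaussianEnlargement {X : Type*} [MetricSpace X] [MeasurableSpace X]
    (ν : Measure X) (τ : ℝ) : Prop :=
  ∀ E : Set X, MeasurableSet E → 0 < ν E → ν E < 1 → ∀ r : ℝ, 0 ≤ r →
    ENNReal.ofReal (Phi (PhiInv (ν E).toReal + r / Real.sqrt (2 * τ))) ≤ ν (enlarge E r)

/-- The distance `d(A,B) = inf {d(a,b) : a ∈ A, b ∈ B}` between two sets. -/
noncomputable def setDist {X : Type*} [MetricSpace X] (A B : Set X) : ℝ :=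
  sInf (Set.image2 dist A B)

/-! By Chebyshev's inequality the ball of radius `√(2Hτ)` about `z` has measure at least `1/2`, so
its Gaussian enlargement says that the excess `Y` has upper tails no heavier than those of
`√(2τ) Z⁺`, where `Z` is a standard normal variable. Hence `E f(Y) ≤ E f(√(2τ) Z⁺)` for every
monotone `f`, and for the two functions at hand the right-hand side is a Gaussian integral over the
half-line plus the contribution `f(0) / 2` of `{Z ≤ 0}`. -/

open ProbabilityTheory Filter Set
open scoped ENNReal NNReal

section CDF

variable (μ : Measure ℝ) [IsProbabilityMeasure μ]

lemma continuous_cdf [NullSingletonClass μ] : Continuous (cdf μ) := by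
  refine continuous_iff_continuousAt.2 fun a => ?_
  rw [(monotone_cdf μ).continuousAt_iff_leftLim_eq_rightLim, (cdf μ).rightLim_eq]
  refine le_antisymm ((monotone_cdf μ).leftLim_le le_rfl) ?_
  have h : (cdf μ).measure {a} = 0 := by rw [measure_cdf, measure_singleton]
  rwa [StieltjesFunction.measure_singleton, ENNReal.ofReal_eq_zero, sub_nonpos] at h

lemma strictMono_cdf [μ.IsOpenPosMeasure] : StrictMono (cdf μ) := by
  intro a b hab
  have h : 0 < (cdf μ).measure (Ioc a b) := by
    rw [measure_cdf]
    exact (isOpen_Ioo.measure_pos μ (nonempty_Ioo.2 hab)).trans_le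
      (measure_mono Ioo_subset_Ioc_self)
  rwa [StieltjesFunction.measure_Ioc, ENNReal.ofReal_pos, sub_pos] at h

end CDF

lemma gaussPdf_eq_gaussianPDFReal : gaussPdf = gaussianPDFReal 0 1 := by
  ext x
  simp [gaussPdf, gaussianPDFReal_def]

lemma Phi_eq_cdf_gaussianReal : Phi = cdf (gaussianReal 0 1) := by
  ext r
  rw [cdf_eq_real, Measure.real, gaussianReal_apply_eq_integral 0 one_ne_zero,
    ← gaussPdf_eq_gaussianPDFReal, ENNReal.toReal_ofReal]
  · rfl
  · rw [gaussPdf_eq_gaussianPDFReal]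
    exact integral_nonneg fun x => gaussianPDFReal_nonneg 0 1 x

lemma ofReal_Phi (r : ℝ) : ENNReal.ofReal (Phi r) = gaussianReal 0 1 (Iic r) := by
  rw [Phi_eq_cdf_gaussianReal, ofReal_cdf]

lemma Phi_nonneg (r : ℝ) : 0 ≤ Phi r := by
  rw [Phi_eq_cdf_gaussianReal]
  exact cdf_nonneg _ r

lemma continuous_Phi : Continuous Phi := by
  have := nullSingletonClass_gaussianReal (μ := 0) (one_ne_zero (α := ℝ≥0))
  rw [Phi_eq_cdf_gaussianReal]
  exact continuous_cdf _

lemma strictMono_Phi : StrictMono Phi := by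
  have := (gaussianReal_absolutelyContinuous' 0 one_ne_zero).isOpenPosMeasure
  rw [Phi_eq_cdf_gaussianReal]
  exact strictMono_cdf _

lemma gaussianReal_Ioi_eq_ofReal_Phi (m r : ℝ) :
    gaussianReal m 1 (Ioi r) = ENNReal.ofReal (Phi (m - r)) := by
  have := nullSingletonClass_gaussianReal (μ := 0) (one_ne_zero (α := ℝ≥0))
  have hreflect : (gaussianReal m 1).map (m - ·) = gaussianReal 0 1 := by
    rw [gaussianReal_map_const_sub, sub_self]
  rw [ofReal_Phi, ← measure_congr Iio_ae_eq_Iic, ← hreflect,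
    Measure.map_apply (by fun_prop) measurableSet_Iio]
  congr 1
  ext x
  simp

lemma gaussianReal_Ici_eq_one_sub (r : ℝ) :
    gaussianReal 0 1 (Ici r) = 1 - ENNReal.ofReal (Phi r) := by
  have := nullSingletonClass_gaussianReal (μ := 0) (one_ne_zero (α := ℝ≥0))
  rw [ofReal_Phi, ← prob_compl_eq_one_sub measurableSet_Iic, compl_Iic,
    measure_congr Ioi_ae_eq_Ici]

lemma Phi_zero : Phi 0 = 1 / 2 := by
  have hsymm : gaussianReal 0 1 (Iic 0) = gaussianReal 0 1 (Iic 0)ᶜ := by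
    rw [← ofReal_Phi, compl_Iic, gaussianReal_Ioi_eq_ofReal_Phi, sub_zero]
  have hsum := prob_add_prob_compl (μ := gaussianReal 0 1) (measurableSet_Iic (a := (0 : ℝ)))
  rw [← hsymm, ← ofReal_Phi, ← ENNReal.ofReal_add (Phi_nonneg 0) (Phi_nonneg 0),
    ENNReal.ofReal_eq_one] at hsum
  linarith

lemma Phi_PhiInv {p : ℝ} (hp : p ∈ Ioo 0 1) : Phi (PhiInv p) = p := by
  have hbot := tendsto_cdf_atBot (gaussianReal 0 1)
  have htop := tendsto_cdf_atTop (gaussianReal 0 1)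
  rw [← Phi_eq_cdf_gaussianReal] at hbot htop
  exact Function.invFun_eq (mem_range_of_exists_le_of_exists_ge continuous_Phi
    (hbot.eventually_le_const hp.1).exists (htop.eventually_const_le hp.2).exists)

lemma PhiInv_nonneg {p : ℝ} (hp : 1 / 2 ≤ p) (hp1 : p < 1) : 0 ≤ PhiInv p := by
  rwa [← strictMono_Phi.le_iff_le, Phi_zero, Phi_PhiInv ⟨by linarith, hp1⟩]

lemma lintegral_comp_max_zero (μ : Measure ℝ) (f : ℝ → ℝ≥0∞) :
    ∫⁻ x, f (max x 0) ∂μ = f 0 * μ (Iic 0) + ∫⁻ x in Ioi 0, f x ∂μ := by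
  rw [← lintegral_add_compl _ (measurableSet_Iic (a := (0 : ℝ))), compl_Iic,
    setLIntegral_congr_fun measurableSet_Iic fun x hx => by rw [max_eq_right hx],
    setLIntegral_congr_fun measurableSet_Ioi fun x hx => by rw [max_eq_left (le_of_lt hx)],
    setLIntegral_const]

lemma setLIntegral_gaussianReal (m : ℝ) {v : ℝ≥0} (hv : v ≠ 0) {s : Set ℝ} (hs : MeasurableSet s)
    (f : ℝ → ℝ≥0∞) :
    ∫⁻ x in s, f x ∂gaussianReal m v = ∫⁻ x in s, gaussianPDF m v x * f x := by
  rw [gaussianReal_of_var_ne_zero _ hv,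
    setLIntegral_withDensity_eq_setLIntegral_mul_non_measurable _ (measurable_gaussianPDF m v) _ hs
      (ae_of_all _ fun _ => gaussianPDF_lt_top)]
  rfl

lemma gaussianPDFReal_mul_exp (m : ℝ) (v : ℝ≥0) (a x : ℝ) :
    gaussianPDFReal m v x * exp (a * x) =
      exp (m * a + v * a ^ 2 / 2) * gaussianPDFReal (m + v * a) v x := by
  rcases eq_or_ne v 0 with rfl | hv
  · simp
  simp only [gaussianPDFReal_def]
  rw [mul_assoc, mul_left_comm (exp _), ← exp_add, ← exp_add]
  congr 2
  field_simp
  ring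

lemma gaussianPDFReal_mul_exp_sq (c x : ℝ) :
    gaussianPDFReal 0 1 x * exp (c * x ^ 2) = (√(2 * π))⁻¹ * exp (-(1 / 2 - c) * x ^ 2) := by
  simp only [gaussianPDFReal_def, NNReal.coe_one]
  rw [mul_assoc, ← exp_add]
  ring_nf

lemma lintegral_exp_mul_Ioi_gaussianReal (a : ℝ) :
    ∫⁻ x in Ioi 0, ENNReal.ofReal (exp (a * x)) ∂gaussianReal 0 1 =
      ENNReal.ofReal (exp (a ^ 2 / 2) * Phi a) := by
  have htilt (x : ℝ) : gaussianPDFReal 0 1 x * exp (a * x) =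
      exp (a ^ 2 / 2) * gaussianPDFReal a 1 x := by simpa using gaussianPDFReal_mul_exp 0 1 a x
  rw [setLIntegral_gaussianReal 0 one_ne_zero measurableSet_Ioi]
  calc ∫⁻ x in Ioi 0, gaussianPDF 0 1 x * ENNReal.ofReal (exp (a * x))
      = ∫⁻ x in Ioi 0, ENNReal.ofReal (exp (a ^ 2 / 2)) * gaussianPDF a 1 x := by
        simp only [gaussianPDF, ← ENNReal.ofReal_mul (gaussianPDFReal_nonneg _ _ _),
          ← ENNReal.ofReal_mul (exp_pos _).le, htilt]
    _ = ENNReal.ofReal (exp (a ^ 2 / 2)) * gaussianReal a 1 (Ioi 0) := by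
        rw [lintegral_const_mul _ (measurable_gaussianPDF a 1), gaussianReal_apply a one_ne_zero]
    _ = ENNReal.ofReal (exp (a ^ 2 / 2) * Phi a) := by
        rw [gaussianReal_Ioi_eq_ofReal_Phi, sub_zero, ENNReal.ofReal_mul (exp_pos _).le]

lemma lintegral_exp_mul_sq_Ioi_gaussianReal {c : ℝ} (hc : c < 1 / 2) :
    ∫⁻ x in Ioi 0, ENNReal.ofReal (exp (c * x ^ 2)) ∂gaussianReal 0 1 =
      ENNReal.ofReal (1 / 2 * (√(1 - 2 * c))⁻¹) := by
  have hint : IntegrableOn (fun x => (√(2 * π))⁻¹ * exp (-(1 / 2 - c) * x ^ 2)) (Ioi 0) :=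
    ((integrable_exp_neg_mul_sq (by linarith)).const_mul _).integrableOn
  have hsqrt : √(π / (1 / 2 - c)) = √(2 * π) / √(1 - 2 * c) := by
    rw [← sqrt_div (by positivity)]
    congr 1
    have h₁ : 1 / 2 - c ≠ 0 := by linarith
    have h₂ : 1 - 2 * c ≠ 0 := by linarith
    rw [div_eq_div_iff h₁ h₂]
    ring
  rw [setLIntegral_gaussianReal 0 one_ne_zero measurableSet_Ioi]
  simp only [gaussianPDF, ← ENNReal.ofReal_mul (gaussianPDFReal_nonneg _ _ _),
    gaussianPDFReal_mul_exp_sq]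
  rw [← ofReal_integral_eq_lintegral_ofReal hint (ae_of_all _ fun x => by positivity),
    integral_const_mul, integral_gaussian_Ioi, hsqrt]
  congr 1
  field_simp

/-- The usual stochastic order on laws of real random variables, by which the excess distance is
compared with a Gaussian variable. It is stated through closed upper tails, so on probability
measures it reverses the pointwise order of the distribution functions. -/
def StochasticLE (μ ν : Measure ℝ) : Prop :=
  ∀ s, μ (Ici s) ≤ ν (Ici s)

namespace StochasticLE

variable {μ ν : Measure ℝ} [IsFiniteMeasure μ]

lemma measure_le_of_isUpperSet (h : StochasticLE μ ν) {S : Set ℝ} (hS : IsUpperSet S) :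
    μ S ≤ ν S := by
  rw [hS.ordConnected.measurableSet.measure_eq_iSup_isCompact]
  refine iSup₂_le fun K hKS => iSup_le fun hK => ?_
  rcases K.eq_empty_or_nonempty with rfl | hne
  · simp
  obtain ⟨a, haK, ha⟩ := hK.exists_isLeast hne
  exact (measure_mono ha).trans ((h a).trans (measure_mono (hS.Ici_subset (hKS haK))))

lemma lintegral_coe_le (h : StochasticLE μ ν) {f : ℝ → ℝ≥0} (hf : Monotone f) :
    ∫⁻ x, f x ∂μ ≤ ∫⁻ x, f x ∂ν := by
  have hmeas : Measurable fun x => (f x : ℝ) := hf.measurable.coe_nnreal_real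
  have hnonneg : ∀ x, 0 ≤ (f x : ℝ) := fun x => (f x).2
  simp only [← ENNReal.ofReal_coe_nnreal]
  rw [lintegral_eq_lintegral_meas_le μ (ae_of_all _ hnonneg) hmeas.aemeasurable,
    lintegral_eq_lintegral_meas_le ν (ae_of_all _ hnonneg) hmeas.aemeasurable]
  exact lintegral_mono fun t =>
    h.measure_le_of_isUpperSet fun x y hxy hx => hx.trans (NNReal.coe_le_coe.2 (hf hxy))

lemma lintegral_le (h : StochasticLE μ ν) {f : ℝ → ℝ≥0∞} (hf : Monotone f) :
    ∫⁻ x, f x ∂μ ≤ ∫⁻ x, f x ∂ν := by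
  have htrunc : ∀ x, ⨆ n : ℕ, min (f x) n = f x := fun x => by
    rw [← inf_iSup_eq, ENNReal.iSup_natCast, inf_top_eq]
  have hmono : ∀ n : ℕ, Monotone fun x => min (f x) n := fun n => hf.min monotone_const
  have hne : ∀ (n : ℕ) x, min (f x) n ≠ ∞ := fun n x => by simp
  calc ∫⁻ x, f x ∂μ = ⨆ n : ℕ, ∫⁻ x, min (f x) n ∂μ := by
        rw [← lintegral_iSup (fun n => (hmono n).measurable) fun m n hmn x =>
          min_le_min_left (f x) (Nat.cast_le.2 hmn)]
        simp only [htrunc]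
    _ ≤ ∫⁻ x, f x ∂ν := iSup_le fun n => ?_
  calc ∫⁻ x, min (f x) n ∂μ ≤ ∫⁻ x, min (f x) n ∂ν := by
        simpa only [ENNReal.coe_toNNReal (hne n _)] using
          h.lintegral_coe_le fun x y hxy => ENNReal.toNNReal_mono (hne n y) (hmono n hxy)
    _ ≤ ∫⁻ x, f x ∂ν := lintegral_mono fun x => min_le_left _ _

end StochasticLE

lemma half_le_measure_closedBall {X : Type*} [PseudoMetricSpace X] [MeasurableSpace X]
    [OpensMeasurableSpace X] {ν : Measure X} [IsProbabilityMeasure ν] {z : X} {V : ℝ} (hV : 0 < V)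
    (hz : ∫⁻ y, ENNReal.ofReal (dist z y ^ 2) ∂ν ≤ ENNReal.ofReal V) :
    1 / 2 ≤ ν (Metric.closedBall z √(2 * V)) := by
  have hcompl : ν (Metric.closedBall z √(2 * V))ᶜ ≤ 1 / 2 :=
    calc ν (Metric.closedBall z √(2 * V))ᶜ
        ≤ ν {y | ENNReal.ofReal (2 * V) ≤ ENNReal.ofReal (dist z y ^ 2)} := by
          refine measure_mono fun y hy => ENNReal.ofReal_le_ofReal ?_
          rw [mem_compl_iff, Metric.mem_closedBall', not_le] at hy
          exact ((sqrt_lt' ((sqrt_nonneg _).trans_lt hy)).1 hy).le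
      _ ≤ (∫⁻ y, ENNReal.ofReal (dist z y ^ 2) ∂ν) / ENNReal.ofReal (2 * V) :=
          meas_ge_le_lintegral_div (by fun_prop) (by simpa using hV) ENNReal.ofReal_ne_top
      _ ≤ ENNReal.ofReal V / ENNReal.ofReal (2 * V) := by gcongr
      _ = 1 / 2 := by
          rw [← ENNReal.ofReal_div_of_pos (by positivity), div_mul_cancel_right₀ hV.ne']
          simp
  calc (1 : ℝ≥0∞) / 2 = 1 - 1 / 2 := by simp
    _ ≤ 1 - ν (Metric.closedBall z √(2 * V))ᶜ := tsub_le_tsub_left hcompl 1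
    _ = ν (Metric.closedBall z √(2 * V)) := by
        rw [← prob_compl_eq_one_sub Metric.isClosed_closedBall.measurableSet.compl, compl_compl]

lemma enlarge_closedBall_subset_ball {X : Type*} [MetricSpace X] (z : X) (R : ℝ) {r : ℝ}
    (hr : 0 < r) : enlarge (Metric.closedBall z R) r ⊆ Metric.ball z (R + r) := by
  rw [enlarge, if_neg hr.ne']
  intro y hy
  obtain ⟨w, hw, hyw⟩ := Metric.mem_thickening_iff.1 hy
  rw [Metric.mem_closedBall] at hw
  rw [Metric.mem_ball]
  linarith [dist_triangle y w z]

namespace GaussianEnlargement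

variable {X : Type*} [MetricSpace X] [MeasurableSpace X] {ν : Measure X} {τ : ℝ}
  [IsProbabilityMeasure ν]

lemma ofReal_Phi_le_measure_enlarge (hν : GaussianEnlargement ν τ) {E : Set X}
    (hE : MeasurableSet E) (hhalf : 1 / 2 ≤ ν E) {r : ℝ} (hr : 0 ≤ r) :
    ENNReal.ofReal (Phi (r / √(2 * τ))) ≤ ν (enlarge E r) := by
  rcases (prob_le_one (μ := ν) (s := E)).lt_or_eq with hlt | heq
  · have hreal : 1 / 2 ≤ (ν E).toReal := by
      simpa using ENNReal.toReal_mono hlt.ne_top hhalf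
    have hInv : 0 ≤ PhiInv (ν E).toReal :=
      PhiInv_nonneg hreal (by simpa using ENNReal.toReal_strict_mono ENNReal.one_ne_top hlt)
    calc ENNReal.ofReal (Phi (r / √(2 * τ)))
        ≤ ENNReal.ofReal (Phi (PhiInv (ν E).toReal + r / √(2 * τ))) :=
          ENNReal.ofReal_le_ofReal (strictMono_Phi.monotone (le_add_of_nonneg_left hInv))
      _ ≤ ν (enlarge E r) := hν E hE (lt_of_lt_of_le (by simp) hhalf) hlt r hr
  · calc ENNReal.ofReal (Phi (r / √(2 * τ))) ≤ 1 := by rw [ofReal_Phi]; exact prob_le_one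
      _ = ν E := heq.symm
      _ ≤ ν (enlarge E r) := measure_mono ?_
    rw [enlarge]
    split_ifs with h0
    · rfl
    · exact Metric.self_subset_thickening (hr.lt_of_ne' h0) E

variable [OpensMeasurableSpace X] {z : X} {R : ℝ}

lemma measure_compl_ball_le (hν : GaussianEnlargement ν τ)
    (hhalf : 1 / 2 ≤ ν (Metric.closedBall z R)) {r : ℝ} (hr : 0 < r) :
    ν (Metric.ball z (R + r))ᶜ ≤ gaussianReal 0 1 (Ici (r / √(2 * τ))) := by
  rw [gaussianReal_Ici_eq_one_sub]
  refine prob_compl_le_one_sub_of_le_prob ?_ measurableSet_ball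
  exact (hν.ofReal_Phi_le_measure_enlarge measurableSet_closedBall hhalf hr.le).trans
    (measure_mono (enlarge_closedBall_subset_ball z R hr))

lemma stochasticLE_excess (hν : GaussianEnlargement ν τ) (hτ : 0 < τ)
    (hhalf : 1 / 2 ≤ ν (Metric.closedBall z R)) :
    StochasticLE (ν.map fun y => max (dist z y - R) 0)
      ((gaussianReal 0 1).map fun x => √(2 * τ) * max x 0) := by
  intro s
  have hσ : 0 < √(2 * τ) := by positivity
  rw [Measure.map_apply (by fun_prop) measurableSet_Ici,
    Measure.map_apply (by fun_prop) measurableSet_Ici]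
  rcases le_or_gt s 0 with hs | hs
  · have huniv : (fun x => √(2 * τ) * max x 0) ⁻¹' Ici s = univ :=
      eq_univ_of_forall fun x => hs.trans (by positivity)
    rw [huniv, measure_univ]
    exact prob_le_one
  have hexcess : (fun y => max (dist z y - R) 0) ⁻¹' Ici s = (Metric.ball z (R + s))ᶜ := by
    ext y
    simp [hs.not_ge, le_sub_iff_add_le', dist_comm]
  have hnormal : (fun x => √(2 * τ) * max x 0) ⁻¹' Ici s = Ici (s / √(2 * τ)) := by
    ext x
    rw [mem_preimage, mem_Ici, mem_Ici, ← div_le_iff₀' hσ, le_max_iff,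
      or_iff_left (div_pos hs hσ).not_ge]
  rw [hexcess, hnormal]
  exact hν.measure_compl_ball_le hhalf hs

theorem lintegral_excess_le (hν : GaussianEnlargement ν τ) (hτ : 0 < τ)
    (hhalf : 1 / 2 ≤ ν (Metric.closedBall z R)) {f : ℝ → ℝ≥0∞} (hf : MonotoneOn f (Ici 0)) :
    ∫⁻ y, f (max (dist z y - R) 0) ∂ν ≤
      f 0 / 2 + ∫⁻ x in Ioi 0, f (√(2 * τ) * x) ∂gaussianReal 0 1 := by
  have hpos : Monotone fun x => f (max x 0) := fun x y hxy =>
    hf (le_max_right x 0) (le_max_right y 0) (max_le_max_right 0 hxy)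
  have hscale : ∀ x, 0 ≤ √(2 * τ) * max x 0 := fun x => by positivity
  calc ∫⁻ y, f (max (dist z y - R) 0) ∂ν
      = ∫⁻ x, f (max x 0) ∂ν.map fun y => max (dist z y - R) 0 := by
        rw [lintegral_map hpos.measurable (by fun_prop)]
        simp only [max_assoc, max_self]
    _ ≤ ∫⁻ x, f (max x 0) ∂(gaussianReal 0 1).map fun x => √(2 * τ) * max x 0 :=
        (hν.stochasticLE_excess hτ hhalf).lintegral_le hpos
    _ = ∫⁻ x, f (√(2 * τ) * max x 0) ∂gaussianReal 0 1 := by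
        rw [lintegral_map hpos.measurable (by fun_prop)]
        simp only [max_eq_left (hscale _)]
    _ = f 0 / 2 + ∫⁻ x in Ioi 0, f (√(2 * τ) * x) ∂gaussianReal 0 1 := by
        rw [lintegral_comp_max_zero _ fun x => f (√(2 * τ) * x), mul_zero, ← ofReal_Phi, Phi_zero]
        simp [div_eq_mul_inv]

lemma lintegral_exp_mul_excess_le (hν : GaussianEnlargement ν τ) (hτ : 0 < τ)
    (hhalf : 1 / 2 ≤ ν (Metric.closedBall z R)) {a : ℝ} (ha : 0 ≤ a) :
    ∫⁻ y, ENNReal.ofReal (exp (a * max (dist z y - R) 0)) ∂ν ≤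
      ENNReal.ofReal (1 / 2 + exp (τ * a ^ 2) * Phi (a * √(2 * τ))) := by
  have hmono : Monotone fun x => ENNReal.ofReal (exp (a * x)) := fun x y hxy => by
    dsimp only
    gcongr
  have hvar : (a * √(2 * τ)) ^ 2 / 2 = τ * a ^ 2 := by
    rw [mul_pow, sq_sqrt (by positivity)]
    ring
  refine (hν.lintegral_excess_le hτ hhalf (hmono.monotoneOn _)).trans_eq ?_
  simp only [← mul_assoc, lintegral_exp_mul_Ioi_gaussianReal, hvar]
  rw [ENNReal.ofReal_add (by positivity) (mul_nonneg (exp_pos _).le (Phi_nonneg _))]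
  simp

lemma lintegral_exp_sq_excess_le (hν : GaussianEnlargement ν τ) (hτ : 0 < τ)
    (hhalf : 1 / 2 ≤ ν (Metric.closedBall z R)) {β : ℝ} (hβ₀ : 0 ≤ β) (hβ : β < 1 / 4) :
    ∫⁻ y, ENNReal.ofReal (exp (β * max (dist z y - R) 0 ^ 2 / τ)) ∂ν ≤
      ENNReal.ofReal (1 / 2 + 1 / 2 * (√(1 - 4 * β))⁻¹) := by
  have hmono : MonotoneOn (fun x => ENNReal.ofReal (exp (β * x ^ 2 / τ))) (Ici 0) :=
    fun x (hx : 0 ≤ x) y _ hxy => by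
      dsimp only
      gcongr
  have hscale (x : ℝ) : β * (√(2 * τ) * x) ^ 2 / τ = 2 * β * x ^ 2 := by
    rw [mul_pow, sq_sqrt (by positivity)]
    field_simp
  have hrate : 1 - 2 * (2 * β) = 1 - 4 * β := by ring
  refine (hν.lintegral_excess_le hτ hhalf hmono).trans_eq ?_
  simp only [hscale]
  rw [lintegral_exp_mul_sq_Ioi_gaussianReal (by linarith), hrate,
    ENNReal.ofReal_add (by positivity) (by positivity)]
  simp

end GaussianEnlargement

/-- Exponential moments of the excess distance from an `H`-center: if `ν` satisfies the
Gaussian enlargement property with parameter `τ`, `∫ d(z,y)² dν ≤ Hτ`, and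
`Y(y) = (d(z,y) - √(2Hτ))₊`, then `∫ e^{λY} dν ≤ 1/2 + e^{τλ²} Φ(λ√(2τ))` for every
`λ ≥ 0`, and `∫ exp(βY²/τ) dν ≤ 1/2 + (1/2)(1-4β)^{-1/2}` for every `0 ≤ β < 1/4`. -/
theorem stmt15 {X : Type*} [MetricSpace X] [MeasurableSpace X] [BorelSpace X]
    (ν : Measure X) [IsProbabilityMeasure ν] (τ : ℝ) (hτ : 0 < τ)
    (hGEP : GaussianEnlargement ν τ)
    (H : ℝ) (hH : 0 < H) (z : X)
    (hz : ∫⁻ y, ENNReal.ofReal (dist z y ^ 2) ∂ν ≤ ENNReal.ofReal (H * τ))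
    (Y : X → ℝ) (hY : ∀ y, Y y = max (dist z y - Real.sqrt (2 * H * τ)) 0) :
    (∀ lam ≥ (0 : ℝ),
      ∫⁻ y, ENNReal.ofReal (Real.exp (lam * Y y)) ∂ν ≤
        ENNReal.ofReal (1 / 2 +
          Real.exp (τ * lam ^ 2) * Phi (lam * Real.sqrt (2 * τ)))) ∧
    (∀ β : ℝ, 0 ≤ β → β < 1 / 4 →
      ∫⁻ y, ENNReal.ofReal (Real.exp (β * (Y y) ^ 2 / τ)) ∂ν ≤
        ENNReal.ofReal (1 / 2 + (1 / 2) * (Real.sqrt (1 - 4 * β))⁻¹)) := by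
  have hhalf : 1 / 2 ≤ ν (Metric.closedBall z √(2 * H * τ)) := by
    rw [mul_assoc]
    exact half_le_measure_closedBall (mul_pos hH hτ) hz
  simp only [hY]
  exact ⟨fun _ hlam => hGEP.lintegral_exp_mul_excess_le hτ hhalf hlam,
    fun _ hβ₀ hβ => hGEP.lintegral_exp_sq_excess_le hτ hhalf hβ₀ hβ⟩
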